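/- Let d = 3, let ν, κ > 0 satisfy κ² < ν² < (9/8) κ², and let γ ∈ (1,3). There exists δ > 0, depending only on γ, with the following property: for every sufficiently small ε > 0 (smaller than a threshold depending only on γ, ν, κ), every T > 0 and every smooth initial data (ρ⁰, u⁰) with ρ⁰ > 0, there is a constant C, depending only on ε, ν, κ, γ, T and (ρ⁰, u⁰), such that every smooth solution (ρ, u) of (QNS_ε) on [0,T] × T³ with initial data (ρ⁰, u⁰) satisfies sup_{t∈(0,T)} ∫_{T³} ρ |w|^{3+2δ} dx ≤ C, where w = u + μ ∇(φ_ε(ρ)). -/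

import Mathlib

open MeasureTheory Real

noncomputable section

/-- Partial derivative of a scalar field in the coordinate direction `i`. -/
def pd {d : ℕ} (i : Fin d) (f : (Fin d → ℝ) → ℝ) (x : Fin d → ℝ) : ℝ :=
  fderiv ℝ f x (Pi.single i 1)

/-- Gradient of a scalar field. -/
def grad {d : ℕ} (f : (Fin d → ℝ) → ℝ) (x : Fin d → ℝ) : Fin d → ℝ :=
  fun i => pd i f x

/-- Divergence of a vector field. -/
def dvg {d : ℕ} (u : (Fin d → ℝ) → (Fin d → ℝ)) (x : Fin d → ℝ) : ℝ :=
  ∑ i, pd i (fun y => u y i) x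

/-- Row-wise divergence of a matrix field: `(dvgM M x) i = ∑ j, ∂_j M_{ij}`. -/
def dvgM {d : ℕ} (M : (Fin d → ℝ) → Fin d → Fin d → ℝ) (x : Fin d → ℝ) : Fin d → ℝ :=
  fun i => ∑ j, pd j (fun y => M y i j) x

/-- Hessian of a scalar field. -/
def hess {d : ℕ} (f : (Fin d → ℝ) → ℝ) (x : Fin d → ℝ) : Fin d → Fin d → ℝ :=
  fun i j => pd i (fun y => pd j f y) x

/-- Laplacian of a scalar field. -/
def lap {d : ℕ} (f : (Fin d → ℝ) → ℝ) (x : Fin d → ℝ) : ℝ :=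
  ∑ i, pd i (fun y => pd i f y) x

/-- Jacobian matrix of a vector field: `(jac u x) i j = ∂_j u_i`. -/
def jac {d : ℕ} (u : (Fin d → ℝ) → (Fin d → ℝ)) (x : Fin d → ℝ) : Fin d → Fin d → ℝ :=
  fun i j => pd j (fun y => u y i) x

/-- Symmetric part of the gradient of a vector field, `Du = (∇u + (∇u)ᵀ)/2`. -/
def symD {d : ℕ} (u : (Fin d → ℝ) → (Fin d → ℝ)) (x : Fin d → ℝ) : Fin d → Fin d → ℝ :=
  fun i j => (jac u x i j + jac u x j i) / 2

/-- Antisymmetric part of the gradient of a vector field, `Au = (∇u − (∇u)ᵀ)/2`. -/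
def antiD {d : ℕ} (u : (Fin d → ℝ) → (Fin d → ℝ)) (x : Fin d → ℝ) : Fin d → Fin d → ℝ :=
  fun i j => (jac u x i j - jac u x j i) / 2

/-- Tensor product of two vectors: `(a ⊗ b)_{ij} = a_i b_j`. -/
def tens {d : ℕ} (a b : Fin d → ℝ) : Fin d → Fin d → ℝ := fun i j => a i * b j

/-- ℤ^d-periodicity: a function of this kind descends to the torus `T^d = ℝ^d/ℤ^d`. -/
def SpacePeriodic {d : ℕ} {E : Type*} (f : (Fin d → ℝ) → E) : Prop :=
  ∀ x : Fin d → ℝ, ∀ n : Fin d → ℤ, f (x + fun i => (n i : ℝ)) = f x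

/-- Fundamental domain of the torus `T^d = ℝ^d/ℤ^d` (with its probability Lebesgue measure). -/
def unitBox (d : ℕ) : Set (Fin d → ℝ) := Set.Icc 0 1

/-- The approximating viscosity coefficient `h_ε(r) = r + ε r^{7/8} + ε r^γ`. -/
def hfun (ε γ r : ℝ) : ℝ := r + ε * r ^ ((7 : ℝ) / 8) + ε * r ^ γ

/-- `g_ε(r) = r h_ε'(r) − h_ε(r)`. -/
def gfun (ε γ r : ℝ) : ℝ := r * deriv (hfun ε γ) r - hfun ε γ r

/-- `λ(ε) = e^{−1/ε⁴}`. -/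
def lamfun (ε : ℝ) : ℝ := Real.exp (-1 / ε ^ 4)

/-- The damping coefficient `p̃_ε(r) = λ(ε)(r^{1/ε²} + r^{−1/ε²})`. -/
def ptil (ε r : ℝ) : ℝ := lamfun ε * (r ^ (1 / ε ^ 2) + r ^ (-(1 / ε ^ 2)))

/-- `μ = ν − √(ν² − κ²)`. -/
def muof (ν κ : ℝ) : ℝ := ν - Real.sqrt (ν ^ 2 - κ ^ 2)

/-- `p_ε` is an antiderivative on `(0,∞)` of `r ↦ μ p̃_ε(r) h_ε'(r) / r`. -/
def IsPeps (ε γ ν κ : ℝ) (P : ℝ → ℝ) : Prop :=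
  ∀ r : ℝ, 0 < r → HasDerivAt P (muof ν κ * ptil ε r * deriv (hfun ε γ) r / r) r

/-- `φ_ε` is a smooth function on `(0,∞)` with `r φ_ε'(r) = h_ε'(r)`. -/
def IsPhieps (ε γ : ℝ) (Φ : ℝ → ℝ) : Prop :=
  ContDiffOn ℝ (⊤ : ℕ∞) Φ (Set.Ioi 0) ∧ ∀ r : ℝ, 0 < r → r * deriv Φ r = deriv (hfun ε γ) r

/-- `f_ε` satisfies `r f_ε'(r) − f_ε(r) = p_ε(r)` on `(0,∞)`. -/
def IsFeps (P F : ℝ → ℝ) : Prop :=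
  (∀ r : ℝ, 0 < r → DifferentiableAt ℝ F r) ∧
  ∀ r : ℝ, 0 < r → r * deriv F r - F r = P r

/-- The vector field `∇( h_ε'(ρ) div(h_ε'(ρ) ∇√ρ) / √ρ )`; the capillarity term of (QNS_ε) is
`2 κ² ρ` times this field. -/
def Kvec {d : ℕ} (ε γ : ℝ) (ρ : (Fin d → ℝ) → ℝ) (x : Fin d → ℝ) : Fin d → ℝ :=
  grad (fun y => deriv (hfun ε γ) (ρ y) *
      dvg (fun z => deriv (hfun ε γ) (ρ z) • grad (fun w => Real.sqrt (ρ w)) z) y /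
      Real.sqrt (ρ y)) x

/-- A smooth solution of the approximating system (QNS_ε) on `(0,T) × T^d`:
a pair of `C^∞` functions on `[0,T] × T^d` with `ρ > 0` everywhere, satisfying the continuity
equation and the momentum equation pointwise. -/
def IsQNSSol (d : ℕ) (ε γ ν κ T : ℝ) (P : ℝ → ℝ)
    (ρ : ℝ → (Fin d → ℝ) → ℝ) (u : ℝ → (Fin d → ℝ) → (Fin d → ℝ)) : Prop :=
  ContDiffOn ℝ (⊤ : ℕ∞) (fun p : ℝ × (Fin d → ℝ) => ρ p.1 p.2) (Set.Icc 0 T ×ˢ Set.univ) ∧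
  ContDiffOn ℝ (⊤ : ℕ∞) (fun p : ℝ × (Fin d → ℝ) => u p.1 p.2) (Set.Icc 0 T ×ˢ Set.univ) ∧
  (∀ t x, 0 < ρ t x) ∧
  (∀ t, SpacePeriodic (ρ t)) ∧
  (∀ t, SpacePeriodic (u t)) ∧
  (∀ t ∈ Set.Ioo 0 T, ∀ x : Fin d → ℝ,
    deriv (fun s => ρ s x) t + dvg (fun y => ρ t y • u t y) x = 0) ∧
  (∀ t ∈ Set.Ioo 0 T, ∀ x : Fin d → ℝ, ∀ i : Fin d,
    deriv (fun s => ρ s x * u s x i) t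
      + dvgM (fun y i' j => ρ t y * u t y i' * u t y j) x i
      + grad (fun y => ρ t y ^ γ + P (ρ t y)) x i
      + ptil ε (ρ t x) * u t x i
    = 2 * ν * dvgM (fun y i' j => hfun ε γ (ρ t y) * symD (u t) y i' j) x i
      + 2 * ν * grad (fun y => gfun ε γ (ρ t y) * dvg (u t) y) x i
      + 2 * κ ^ 2 * ρ t x * Kvec ε γ (ρ t) x i)

section alg
variable {A : Type*} [CommRing A] [Algebra ℝ A]

theorem wt_eq (D : Fin 3 → Derivation ℝ A A) (hc : ∀ i j a, D i (D j a) = D j (D i a))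
    (ν μ κ2 : A) (hν : ∀ i, D i ν = 0) (hμ : ∀ i, D i μ = 0)
    (hrel : κ2 = 2 * ν * μ - μ ^ 2)
    (r rt h h1 g q p ψ ψt : A) (v vt : Fin 3 → A)
    (hh : ∀ i, D i h = h1 * D i r) (hψ : ∀ i, r * D i ψ = h1 * D i r)
    (hg : g = r * h1 - h)
    (hcont : rt = - ∑ j, D j (r * v j))
    (hψt : ψt = - ∑ j, v j * D j ψ - h1 * ∑ j, D j (v j))
    (i : Fin 3)
    (hmom : rt * v i + r * vt i + ∑ j, D j (r * v i * v j) + (D i q + μ * p * D i ψ) + p * v i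
      = ν * ∑ j, D j (h * (D j (v i) + D i (v j))) + 2 * ν * D i (g * ∑ j, D j (v j))
        + κ2 * (r * (∑ j, D j ψ * D i (D j ψ) + D i (h1 * ∑ j, D j (D j ψ)))))
    (w wt : Fin 3 → A) (hw : ∀ i, w i = v i + μ * D i ψ) (hwt : ∀ i, wt i = vt i + μ * D i ψt) :
    r * (wt i + ∑ j, v j * D j (w i)) = - p * w i
      + ∑ j, D j (h * (ν * D j (w i) + (ν - μ) * D i (w j)))
      + D i ((2 * ν - μ) * g * ∑ j, D j (w j) - q) := by
  subst hrel hg hcont hψt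
  simp only [hw, hwt, Fin.sum_univ_three, map_add, map_sub, map_neg, Derivation.leibniz, smul_eq_mul,
    hν, hμ, hh, mul_zero, zero_mul, add_zero, zero_add, Derivation.map_natCast] at hmom ⊢
  have h2 : ∀ i, D i (2 : A) = 0 := fun i => by
    have := (D i).map_natCast 2
    simpa using this
  simp only [h2, mul_zero, add_zero] at hmom ⊢
  have e0 := hψ 0
  have e1 := hψ 1
  have e2 := hψ 2
  have c10 := hc 1 0
  have c20 := hc 2 0
  have c21 := hc 2 1
  fin_cases i <;> simp only [Fin.zero_eta, Fin.mk_one, Fin.reduceFinMk, c10, c20, c21] at hmom ⊢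
  · linear_combination hmom + ((2*ν*μ-μ^2) * D 0 (D 0 ψ) - μ * D 0 (v 0)) * e0 + ((2*ν*μ-μ^2) * D 0 (D 1 ψ) - μ * D 0 (v 1)) * e1 + ((2*ν*μ-μ^2) * D 0 (D 2 ψ) - μ * D 0 (v 2)) * e2
  · linear_combination hmom + ((2*ν*μ-μ^2) * D 0 (D 1 ψ) - μ * D 1 (v 0)) * e0 + ((2*ν*μ-μ^2) * D 1 (D 1 ψ) - μ * D 1 (v 1)) * e1 + ((2*ν*μ-μ^2) * D 1 (D 2 ψ) - μ * D 1 (v 2)) * e2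
  · linear_combination hmom + ((2*ν*μ-μ^2) * D 0 (D 2 ψ) - μ * D 2 (v 0)) * e0 + ((2*ν*μ-μ^2) * D 1 (D 2 ψ) - μ * D 2 (v 1)) * e1 + ((2*ν*μ-μ^2) * D 2 (D 2 ψ) - μ * D 2 (v 2)) * e2

theorem energy_alg (D : Fin 3 → Derivation ℝ A A)
    (r rt p : A) (v w wt : Fin 3 → A) (S : Fin 3 → Fin 3 → A)
    (hcont : rt = - ∑ j, D j (r * v j))
    (hw : ∀ i, r * (wt i + ∑ j, v j * D j (w i)) = - p * w i + ∑ j, D j (S i j)) :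
    rt * (∑ i, w i ^ 2) ^ 2 + 4 * r * (∑ i, w i ^ 2) * ∑ i, w i * wt i
     = ∑ j, D j (- r * v j * (∑ i, w i ^ 2) ^ 2 + 4 * (∑ i, w i ^ 2) * ∑ i, w i * S i j)
       - 4 * p * (∑ i, w i ^ 2) ^ 2
       - 4 * ∑ j, ∑ i, ((∑ i, w i ^ 2) * D j (w i) + 2 * w i * ∑ k, w k * D j (w k)) * S i j := by
  have h4 : ∀ i, D i (4 : A) = 0 := fun i => by
    have := (D i).map_natCast 4
    simpa using this
  subst hcont
  have h0 := hw 0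
  have h1 := hw 1
  have h2 := hw 2
  simp only [Fin.sum_univ_three, map_add, map_sub, map_neg, Derivation.leibniz, smul_eq_mul, pow_two,
    h4, mul_zero, add_zero, zero_add] at h0 h1 h2 ⊢
  linear_combination (4 * (w 0 ^2 + w 1 ^2 + w 2 ^2)) * (w 0 * h0 + w 1 * h1 + w 2 * h2)
end alg
set_option maxHeartbeats 2000000 in
theorem symm_block (a b c d' e f n0 n1 n2 : ℝ) (hs : n0^2+n1^2+n2^2 = 1)
    (y0 y1 y2 d t : ℝ) (hy0 : y0 = a*n0+d'*n1+e*n2) (hy1 : y1 = d'*n0+b*n1+f*n2)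
    (hy2 : y2 = e*n0+f*n1+c*n2) (hd : d = n0*y0+n1*y1+n2*y2) (ht : t = a+b+c-d) :
    2*(y0^2+y1^2+y2^2) - d^2 + t^2/2 ≤ a^2+b^2+c^2+2*(d'^2+e^2+f^2) := by
  have key : (a - 2*n0*y0 + d*n0*n0 - t/2*(1-n0*n0))^2 + (b - 2*n1*y1 + d*n1*n1 - t/2*(1-n1*n1))^2
     + (c - 2*n2*y2 + d*n2*n2 - t/2*(1-n2*n2))^2
     + 2*(d' - n0*y1 - n1*y0 + d*n0*n1 + t/2*n0*n1)^2
     + 2*(e - n0*y2 - n2*y0 + d*n0*n2 + t/2*n0*n2)^2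
     + 2*(f - n1*y2 - n2*y1 + d*n1*n2 + t/2*n1*n2)^2
     = a^2+b^2+c^2+2*(d'^2+e^2+f^2) - (2*(y0^2+y1^2+y2^2) - d^2 + t^2/2) := by
    subst ht hd hy0 hy1 hy2
    set y0 := a*n0+d'*n1+e*n2 with hy0
    set y1 := d'*n0+b*n1+f*n2 with hy1
    set y2 := e*n0+f*n1+c*n2 with hy2
    set d := n0*y0+n1*y1+n2*y2 with hd
    set t := a+b+c-d with ht
    have : (2*(y0^2+y1^2+y2^2) + d^2*((n0^2+n1^2+n2^2)-3) + t*d*((n0^2+n1^2+n2^2)-2)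
      + t^2/4*((n0^2+n1^2+n2^2)-1)) * ((n0^2+n1^2+n2^2)-1) = 0 := by rw [hs]; ring
    rw [← sub_eq_zero]
    refine Eq.trans ?_ this
    simp only [ht, hd, hy0, hy1, hy2]
    ring
  have h0 := key.le
  have h1 : 0 ≤ (a - 2*n0*y0 + d*n0*n0 - t/2*(1-n0*n0))^2 + (b - 2*n1*y1 + d*n1*n1 - t/2*(1-n1*n1))^2
     + (c - 2*n2*y2 + d*n2*n2 - t/2*(1-n2*n2))^2
     + 2*(d' - n0*y1 - n1*y0 + d*n0*n1 + t/2*n0*n1)^2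
     + 2*(e - n0*y2 - n2*y0 + d*n0*n2 + t/2*n0*n2)^2
     + 2*(f - n1*y2 - n2*y1 + d*n1*n2 + t/2*n1*n2)^2 := by positivity
  exact sub_nonneg.1 (h1.trans h0)

theorem young1 (c q x k : ℝ) (hc : 0 < c) : -(k^2*q^2/(4*c)) ≤ c*x^2 - k*q*x := by
  have : c*x^2 - k*q*x + k^2*q^2/(4*c) = c * (x - k*q/(2*c))^2 := by field_simp; ring
  nlinarith [mul_nonneg hc.le (sq_nonneg (x - k*q/(2*c)))]

theorem gbound (h g d t : ℝ) (hg1 : -h/8 ≤ g) (hg2 : g ≤ 2*h) :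
    h/4*(d^2+t^2) ≤ h*(3*d^2+t^2/2) + g*(3*d^2+4*d*t+t^2) := by
  have e1 : 0 ≤ 19/8*d^2-1/2*d*t+1/8*t^2 := by nlinarith [sq_nonneg (2*d-t), sq_nonneg d]
  have e2 : 0 ≤ (35/4)*d^2+8*d*t+(9/4)*t^2 := by nlinarith [sq_nonneg (35/4*d+4*t), sq_nonneg t]
  have e3 := mul_nonneg (sub_nonneg.2 hg2) e1
  have e4 := mul_nonneg (sub_nonneg.2 hg1) e2
  linarith

set_option maxHeartbeats 2000000 in
/-- coercivity on unit vectors -/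
theorem coer_unit (ν μ κ h g q : ℝ) (hμ : 0 < μ) (hμν : μ < 2 * ν) (hκ : 0 < κ)
    (hrel : κ^2 = 2*ν*μ-μ^2) (hν : ν^2 < 9/8*κ^2) (hh : 0 < h) (hg1 : -h/8 ≤ g) (hg2 : g ≤ 2*h)
    (n : Fin 3 → ℝ) (hn : n 0 ^2 + n 1 ^2 + n 2^2 = 1) (B : Fin 3 → Fin 3 → ℝ) :
    -(10*q^2/((2*ν-μ)*h)) ≤ ∑ j, ∑ i, (B i j + 2 * n i * ∑ k, n k * B k j) *
      (h * (ν * B i j + (ν-μ) * B j i) + if i = j then (2*ν-μ)*g*(∑ k, B k k) - q else 0) := by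
  obtain ⟨y0, hy0⟩ : ∃ y, y = B 0 0*n 0+(B 0 1 + B 1 0)/2*n 1+(B 0 2 + B 2 0)/2*n 2 := ⟨_, rfl⟩
  obtain ⟨y1, hy1⟩ : ∃ y, y = (B 0 1 + B 1 0)/2*n 0+B 1 1*n 1+(B 1 2 + B 2 1)/2*n 2 := ⟨_, rfl⟩
  obtain ⟨y2, hy2⟩ : ∃ y, y = (B 0 2 + B 2 0)/2*n 0+(B 1 2 + B 2 1)/2*n 1+B 2 2*n 2 := ⟨_, rfl⟩
  obtain ⟨d, hd⟩ : ∃ d, d = n 0*y0+n 1*y1+n 2*y2 := ⟨_, rfl⟩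
  obtain ⟨t, ht⟩ : ∃ t, t = B 0 0 + B 1 1 + B 2 2 - d := ⟨_, rfl⟩
  have F2 := symm_block _ _ _ _ _ _ _ _ _ hn y0 y1 y2 d t hy0 hy1 hy2 hd ht
  obtain ⟨α, hα⟩ : ∃ α, α = (B 0 1 - B 1 0)/2 := ⟨_, rfl⟩
  obtain ⟨β, hβ⟩ : ∃ α, α = (B 0 2 - B 2 0)/2 := ⟨_, rfl⟩
  obtain ⟨θ, hθ⟩ : ∃ α, α = (B 1 2 - B 2 1)/2 := ⟨_, rfl⟩
  obtain ⟨z0, hz0⟩ : ∃ y, y = α*n 1+β*n 2 := ⟨_, rfl⟩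
  obtain ⟨z1, hz1⟩ : ∃ y, y = -α*n 0+θ*n 2 := ⟨_, rfl⟩
  obtain ⟨z2, hz2⟩ : ∃ y, y = -β*n 0-θ*n 1 := ⟨_, rfl⟩
  have F3 : z0^2+z1^2+z2^2 ≤ α^2+β^2+θ^2 := by
    have : α^2+β^2+θ^2 - (z0^2+z1^2+z2^2) = (θ*n 0 - β*n 1 + α*n 2)^2 := by
      subst hz0 hz1 hz2
      linear_combination (-(α^2+β^2+θ^2)) * hn
    exact sub_nonneg.1 (this ▸ sq_nonneg _)
  have hzn : z0*n 0+z1*n 1+z2*n 2 = 0 := by subst hz0 hz1 hz2; ring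
  set a := 2*ν-μ with ha
  have ha0 : 0 < a := by linarith
  have haμ : a*μ = κ^2 := by rw [hrel, ha]; ring
  have comp : ∀ z e : ℝ, 0 ≤ 4*a*e^2+4*μ*z^2-4*ν*(z*e) := by
    intro z e
    have : 0 ≤ a*(4*a*e^2+4*μ*z^2-4*ν*(z*e)) := by
      have : a*(4*a*e^2+4*μ*z^2-4*ν*(z*e)) = (2*a*e-ν*z)^2 + (4*κ^2-ν^2)*z^2 := by rw [← haμ]; ring
      rw [this]
      have : 0 ≤ 4*κ^2-ν^2 := by nlinarith
      positivity
    exact nonneg_of_mul_nonneg_right this ha0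
  have F4 : 0 ≤ 4*a*(y0^2+y1^2+y2^2-d^2) + 4*μ*(z0^2+z1^2+z2^2) - 4*ν*(z0*y0+z1*y1+z2*y2) := by
    have h0 := comp z0 (y0-d*n 0)
    have h1 := comp z1 (y1-d*n 1)
    have h2 := comp z2 (y2-d*n 2)
    have : 4*a*(y0^2+y1^2+y2^2-d^2) + 4*μ*(z0^2+z1^2+z2^2) - 4*ν*(z0*y0+z1*y1+z2*y2)
      = (4*a*(y0-d*n 0)^2+4*μ*z0^2-4*ν*(z0*(y0-d*n 0))) + (4*a*(y1-d*n 1)^2+4*μ*z1^2-4*ν*(z1*(y1-d*n 1)))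
       + (4*a*(y2-d*n 2)^2+4*μ*z2^2-4*ν*(z2*(y2-d*n 2))) := by
      linear_combination (-4*a*d^2)*hn - 4*ν*d*hzn - 8*a*d*hd
    linarith
  have F1 : ∑ j, ∑ i, (B i j + 2 * n i * ∑ k, n k * B k j) *
      (h * (ν * B i j + (ν-μ) * B j i) + if i = j then a*g*(∑ k, B k k) - q else 0)
      = h*(a*((B 0 0^2+B 1 1^2+B 2 2^2+2*(((B 0 1 + B 1 0)/2)^2+((B 0 2 + B 2 0)/2)^2+((B 1 2 + B 2 1)/2)^2))
           + 2*(y0^2+y1^2+y2^2)) + μ*(2*(α^2+β^2+θ^2)+2*(z0^2+z1^2+z2^2)) - 4*ν*(z0*y0+z1*y1+z2*y2))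
        + a*g*((d+t)^2+2*(d+t)*d) - q*(3*d+t) := by
    have : d+t = B 0 0 + B 1 1 + B 2 2 := by rw [ht]; ring
    rw [show 3*d+t = d+t+2*d by ring, this, hd, hz0, hz1, hz2, hy0, hy1, hy2, hα, hβ, hθ]
    simp [Fin.sum_univ_three]
    rw [ha]; ring
  rw [F1]
  have Y1 := young1 (a*h/4) q d 3 (by positivity)
  have Y2 := young1 (a*h/4) q t 1 (by positivity)
  have Y : -(10*q^2/(a*h)) = -(3^2*q^2/(4*(a*h/4))) + -(1^2*q^2/(4*(a*h/4))) := by field_simp; ring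
  rw [Y]
  have G : a*(h/4*(d^2+t^2)) ≤ a*(h*(3*d^2+t^2/2) + g*(3*d^2+4*d*t+t^2)) := by
    apply mul_le_mul_of_nonneg_left _ ha0.le
    exact gbound h g d t hg1 hg2
  have H1 := mul_le_mul_of_nonneg_left F2 (mul_pos hh ha0).le
  have H2 := mul_le_mul_of_nonneg_left F3 (mul_pos hh hμ).le
  have H3 := mul_nonneg hh.le F4
  have H4 : a*(h/4*(d^2+t^2)) = (a*h/4*d^2) + (a*h/4*t^2) := by ring
  clear_value a
  clear F1 F2 F3 F4 comp
  linarith [H1, H2, H3, G, H4, Y1, Y2]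
theorem coer (ν μ κ h g q : ℝ) (hμ : 0 < μ) (hμν : μ < 2 * ν) (hκ : 0 < κ)
    (hrel : κ^2 = 2*ν*μ-μ^2) (hν : ν^2 < 9/8*κ^2) (hh : 0 < h) (hg1 : -h/8 ≤ g) (hg2 : g ≤ 2*h)
    (w : Fin 3 → ℝ) (B : Fin 3 → Fin 3 → ℝ) :
    -(10*q^2/((2*ν-μ)*h) * ∑ i, w i ^2) ≤ ∑ j, ∑ i, ((∑ i, w i ^2) * B i j + 2 * w i * ∑ k, w k * B k j) *
      (h * (ν * B i j + (ν-μ) * B j i) + if i = j then (2*ν-μ)*g*(∑ k, B k k) - q else 0) := by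
  obtain ⟨N, hN⟩ : ∃ N, N = ∑ i, w i^2 := ⟨_, rfl⟩
  rw [← hN]
  have hN0 : 0 ≤ N := hN ▸ Finset.sum_nonneg (fun i _ => sq_nonneg _)
  rcases hN0.eq_or_lt with h0 | h0
  · have : ∀ i, w i = 0 := by
      rw [← h0] at hN
      have := (Finset.sum_eq_zero_iff_of_nonneg (fun i _ => sq_nonneg (w i))).1 hN.symm
      intro i; simpa using this i (Finset.mem_univ i)
    simp [this, ← h0]
  · have hs := Real.sqrt_pos.2 h0
    have hs2 := Real.sq_sqrt hN0
    obtain ⟨s, hsd⟩ : ∃ s, s = √N := ⟨_, rfl⟩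
    rw [← hsd] at hs hs2
    have hwn : ∀ i, w i = s * (w i / s) := fun i => by field_simp
    have hn : (w 0 / s)^2 + (w 1 / s)^2 + (w 2 / s)^2 = 1 := by
      rw [Fin.sum_univ_three, ← hs2] at hN
      field_simp; linarith
    have := coer_unit ν μ κ h g q hμ hμν hκ hrel hν hh hg1 hg2 (fun i => w i / s) hn B
    have := mul_le_mul_of_nonneg_left this h0.le
    calc _ = N * -(10*q^2/((2*ν-μ)*h)) := by ring
      _ ≤ _ := this
      _ = _ := by
        rw [Finset.mul_sum]
        refine Finset.sum_congr rfl fun j _ => ?_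
        rw [Finset.mul_sum]
        refine Finset.sum_congr rfl fun i _ => ?_
        rw [← mul_assoc]
        congr 1
        have : ∑ k, w k * B k j = s * ∑ k, w k / s * B k j := by
          rw [Finset.mul_sum]; refine Finset.sum_congr rfl fun k _ => ?_
          field_simp
        rw [this, ← hs2]
        generalize (∑ k, w k / s * B k j) = Z
        field_simp

open scoped ContDiff in
/-- smooth periodic functions -/
def SF : Subalgebra ℝ ((Fin 3 → ℝ) → ℝ) where
  carrier := {f | ContDiff ℝ ∞ f ∧ SpacePeriodic f}
  mul_mem' := fun {a b} ha hb => ⟨ha.1.mul hb.1, fun x n => by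
    simp only [Pi.mul_apply]; rw [ha.2 x n, hb.2 x n]⟩
  add_mem' := fun {a b} ha hb => ⟨ha.1.add hb.1, fun x n => by
    simp only [Pi.add_apply]; rw [ha.2 x n, hb.2 x n]⟩
  algebraMap_mem' := fun c => ⟨contDiff_const, fun x n => rfl⟩

theorem pd_smooth {f : (Fin 3 → ℝ) → ℝ} (hf : ContDiff ℝ (⊤ : ℕ∞) f) (i : Fin 3) :
    ContDiff ℝ (⊤ : ℕ∞) (pd i f) := by
  have := (hf.fderiv_right (m := ((⊤ : ℕ∞) : WithTop ℕ∞)) (by simp))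
  exact this.clm_apply contDiff_const

theorem pd_periodic {f : (Fin 3 → ℝ) → ℝ} (hf : SpacePeriodic f) (i : Fin 3) :
    SpacePeriodic (pd i f) := by
  intro x n
  have : (fun y => f (y + fun i => (n i : ℝ))) = f := funext fun y => hf y n
  unfold pd
  rw [← fderiv_comp_add_right, this]

theorem SF.diff (f : SF) (x) : DifferentiableAt ℝ f.1 x :=
  (f.2.1.differentiable (by simp)) x

/-- partial derivative as a linear map -/
def pdL (i : Fin 3) : SF →ₗ[ℝ] SF where
  toFun f := ⟨pd i f.1, pd_smooth f.2.1 i, pd_periodic f.2.2 i⟩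
  map_add' f g := by
    ext x
    simp only [pd]
    exact congrArg (fun L => L (Pi.single i 1)) (fderiv_add (SF.diff f x) (SF.diff g x))
  map_smul' c f := by
    ext x
    simp only [pd]
    exact congrArg (fun L => L (Pi.single i 1)) (fderiv_const_smul (SF.diff f x) c)

/-- partial derivative as a derivation -/
def pdD (i : Fin 3) : Derivation ℝ SF SF :=
  Derivation.mk' (pdL i) (by
    intro f g
    ext x
    simp only [pdL, pd]
    exact congrArg (fun L => L (Pi.single i 1)) (fderiv_mul (SF.diff f x) (SF.diff g x)))

theorem pdD_apply (i : Fin 3) (f : SF) (x) : (pdD i f).1 x = pd i f.1 x := rfl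
theorem pdD_coe (i : Fin 3) (f : SF) : (pdD i f).1 = pd i f.1 := rfl

theorem pdD_comm (i j : Fin 3) (f : SF) : pdD i (pdD j f) = pdD j (pdD i f) := by
  ext x
  have h2 : ContDiffAt ℝ (⊤ : ℕ∞) f.1 x := f.2.1.contDiffAt
  have hsym : IsSymmSndFDerivAt ℝ f.1 x := h2.isSymmSndFDerivAt (by simp only [minSmoothness_of_isRCLikeNormedField]; exact WithTop.coe_le_coe.2 (le_top : (2:ℕ∞) ≤ ⊤))
  have hd : DifferentiableAt ℝ (fderiv ℝ f.1) x :=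
    ((f.2.1.fderiv_right (m := ((⊤ : ℕ∞) : WithTop ℕ∞)) (by simp)).differentiable (by simp)) x
  change fderiv ℝ (fun y => fderiv ℝ f.1 y (Pi.single j 1)) x (Pi.single i 1)
    = fderiv ℝ (fun y => fderiv ℝ f.1 y (Pi.single i 1)) x (Pi.single j 1)
  rw [fderiv_clm_apply hd (by fun_prop), fderiv_clm_apply hd (by fun_prop)]
  simpa using hsym.eq _ _

theorem pdD_const (i : Fin 3) (c : ℝ) : pdD i (algebraMap ℝ SF c) = 0 := (pdD i).map_algebraMap c

theorem pd_comp {G : ℝ → ℝ} {G' : ℝ} {f : (Fin 3 → ℝ) → ℝ} {x} (hG : HasDerivAt G G' (f x))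
    (hf : DifferentiableAt ℝ f x) (i : Fin 3) : pd i (fun y => G (f y)) x = G' * pd i f x := by
  have := hG.comp_hasFDerivAt x hf.hasFDerivAt
  unfold pd
  have h2 : fderiv ℝ (fun y => G (f y)) x = G' • fderiv ℝ f x := this.fderiv
  rw [h2]; simp

/-- composition -/
def SF.comp (G : ℝ → ℝ) (hG : ContDiffOn ℝ (⊤ : ℕ∞) G (Set.Ioi 0)) (r : SF) (hr : ∀ x, 0 < r.1 x) : SF :=
  ⟨fun x => G (r.1 x), by
    refine ⟨contDiff_iff_contDiffAt.2 fun x => ?_, fun x n => congrArg G (r.2.2 x n)⟩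
    exact (hG.contDiffAt (Ioi_mem_nhds (hr x))).comp x r.2.1.contDiffAt⟩

theorem rpow_smooth (c : ℝ) : ContDiffOn ℝ (⊤ : ℕ∞) (fun r : ℝ => r ^ c) (Set.Ioi 0) :=
  fun x hx => (Real.contDiffAt_rpow_const_of_ne (ne_of_gt hx)).contDiffWithinAt

theorem hfun_smooth (ε γ : ℝ) : ContDiffOn ℝ (⊤ : ℕ∞) (hfun ε γ) (Set.Ioi 0) :=
  (contDiffOn_id.add (contDiffOn_const.mul (rpow_smooth _))).add (contDiffOn_const.mul (rpow_smooth _))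

theorem ptil_smooth (ε : ℝ) : ContDiffOn ℝ (⊤ : ℕ∞) (ptil ε) (Set.Ioi 0) :=
  contDiffOn_const.mul ((rpow_smooth _).add (rpow_smooth _))

theorem hfun_hasDeriv (ε γ r : ℝ) (hr : 0 < r) : HasDerivAt (hfun ε γ)
    (1 + ε * (7/8 * r ^ ((7:ℝ)/8 - 1)) + ε * (γ * r ^ (γ - 1))) r :=
  ((hasDerivAt_id r).add ((Real.hasDerivAt_rpow_const (Or.inl hr.ne')).const_mul ε)).add
    ((Real.hasDerivAt_rpow_const (Or.inl hr.ne')).const_mul ε)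

theorem hfun_hasDeriv' (ε γ r : ℝ) (hr : 0 < r) : HasDerivAt (hfun ε γ) (deriv (hfun ε γ) r) r :=
  (hfun_hasDeriv ε γ r hr).differentiableAt.hasDerivAt

theorem h1_smooth (ε γ : ℝ) : ContDiffOn ℝ (⊤ : ℕ∞) (deriv (hfun ε γ)) (Set.Ioi 0) :=
  ((contDiffOn_const.add (contDiffOn_const.mul (contDiffOn_const.mul (rpow_smooth _)))).add
    (contDiffOn_const.mul (contDiffOn_const.mul (rpow_smooth _)))).congr
    (fun r hr => (hfun_hasDeriv ε γ r hr).deriv)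

theorem gfun_eq (ε γ r : ℝ) (hr : 0 < r) :
    gfun ε γ r = - (ε/8) * r ^ ((7:ℝ)/8) + ε * (γ-1) * r ^ γ := by
  unfold gfun
  rw [(hfun_hasDeriv ε γ r hr).deriv, Real.rpow_sub_one hr.ne', Real.rpow_sub_one hr.ne', hfun]
  field_simp; ring

theorem hfun_pos (ε γ r : ℝ) (hε : 0 < ε) (hr : 0 < r) : 0 < hfun ε γ r := by
  unfold hfun; positivity

theorem gfun_lo (ε γ r : ℝ) (hε : 0 < ε) (hr : 0 < r) (h1 : 1 < γ) : - hfun ε γ r / 8 ≤ gfun ε γ r := by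
  rw [gfun_eq _ _ _ hr, hfun]
  have h0 : 0 < r ^ γ := by positivity
  nlinarith [mul_pos hε h0, mul_pos (mul_pos hε h0) (sub_pos.2 h1)]

theorem gfun_hi (ε γ r : ℝ) (hε : 0 < ε) (hr : 0 < r) (h3 : γ < 3) : gfun ε γ r ≤ 2 * hfun ε γ r := by
  rw [gfun_eq _ _ _ hr, hfun]
  have h0 : 0 < r ^ γ := by positivity
  have h1 : 0 < r ^ ((7:ℝ)/8) := by positivity
  nlinarith [mul_pos hε h0, mul_pos hε h1, mul_pos (mul_pos hε h0) (sub_pos.2 h3)]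

theorem press (ε γ r a N : ℝ) (hε : 0 < ε) (hr : 0 < r) (ha : 0 < a) (h1 : 1 < γ) (hN : 0 ≤ N)
    (hεγ : 2 * γ ≤ 1 / ε ^ 2) :
    4 * (10 * (r ^ γ)^2 / (a * hfun ε γ r) * N) - 4 * ptil ε r * N ^ 2 ≤ 100 / (a*ε)^2 / lamfun ε := by
  have hl : 0 < lamfun ε := Real.exp_pos _
  have hq : 0 < r ^ γ := by positivity
  have hp : lamfun ε * (r^γ)^2 ≤ ptil ε r := by
    unfold ptil
    apply mul_le_mul_of_nonneg_left _ hl.le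
    rw [← Real.rpow_natCast, ← Real.rpow_mul hr.le]
    push_cast
    rw [mul_comm γ 2]
    rcases le_total 1 r with h | h
    · have := Real.rpow_le_rpow_of_exponent_le h hεγ
      have : 0 < r ^ (-(1/ε^2)) := by positivity
      linarith
    · have e1 : r ^ (2*γ) ≤ 1 := Real.rpow_le_one hr.le h (by linarith)
      have e2 : 1 ≤ r ^ (-(1/ε^2)) := Real.one_le_rpow_of_pos_of_le_one_of_nonpos hr h (by
        have : 0 < 1/ε^2 := by positivity
        linarith)
      have : 0 < r ^ ((1/ε^2)) := by positivity
      linarith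
  have hh : ε * r^γ ≤ hfun ε γ r := by
    unfold hfun
    have : 0 < r ^ ((7:ℝ)/8) := by positivity
    nlinarith [mul_pos hε this]
  have e1 : 10 * (r ^ γ)^2 / (a * hfun ε γ r) ≤ 10 * (r^γ)^2 / (a * (ε * r^γ)) := by
    apply div_le_div_of_nonneg_left (by positivity) (by positivity)
    exact mul_le_mul_of_nonneg_left hh ha.le
  have e2 : 10 * (r^γ)^2 / (a * (ε * r^γ)) = 10 / (a*ε) * r^γ := by field_simp
  rw [e2] at e1
  have e3 := mul_le_mul_of_nonneg_right e1 hN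
  have e4 := mul_le_mul_of_nonneg_right hp (sq_nonneg N)
  have e5 : 4 * (10 / (a*ε) * r^γ * N) - 4 * (lamfun ε * (r^γ)^2 * N^2) = 100 / (a*ε)^2 / lamfun ε
     - 4 * lamfun ε * (r^γ * N - 5/(a*ε)/lamfun ε)^2 := by
    field_simp; ring
  have e6 : 0 ≤ 4 * lamfun ε * (r^γ * N - 5/(a*ε)/lamfun ε)^2 := by positivity
  nlinarith

theorem SF.ext_iff' {f g : SF} (h : ∀ x, f.1 x = g.1 x) : f = g := Subtype.ext (funext h)

theorem SF.sum_apply {ι : Type*} (s : Finset ι) (f : ι → SF) (x) :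
    (∑ i ∈ s, f i : SF).1 x = ∑ i ∈ s, (f i).1 x := by
  have : (∑ i ∈ s, f i : SF).1 = ∑ i ∈ s, (f i).1 := by simp
  rw [this, Finset.sum_apply]

theorem SF.mul_apply (f g : SF) (x) : (f * g).1 x = f.1 x * g.1 x := rfl
theorem SF.add_apply (f g : SF) (x) : (f + g).1 x = f.1 x + g.1 x := rfl
theorem SF.sub_apply (f g : SF) (x) : (f - g).1 x = f.1 x - g.1 x := rfl
theorem SF.neg_apply (f : SF) (x) : (-f).1 x = - f.1 x := rfl
theorem SF.pow_apply (f : SF) (n : ℕ) (x) : (f ^ n).1 x = f.1 x ^ n := rfl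
theorem SF.const_apply (c : ℝ) (x) : (algebraMap ℝ SF c).1 x = c := rfl
theorem SF.two_apply (x) : (2 : SF).1 x = 2 := rfl
theorem SF.four_apply (x) : (4 : SF).1 x = 4 := rfl
theorem SF.zero_apply (x) : (0 : SF).1 x = 0 := rfl

/-- the Bohm potential identity -/
theorem bohm (ε γ : ℝ) (r ψ h1 : SF) (hr : ∀ x, 0 < r.1 x)
    (hh1 : ∀ x, h1.1 x = deriv (hfun ε γ) (r.1 x))
    (hψ : ∀ i, r * pdD i ψ = h1 * pdD i r) (x : Fin 3 → ℝ) (i : Fin 3) :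
    2 * (r.1 x * Kvec ε γ r.1 x i) =
      (r * (∑ j, pdD j ψ * pdD i (pdD j ψ) + pdD i (h1 * ∑ j, pdD j (pdD j ψ)))).1 x := by
  have hsq : ContDiffOn ℝ (⊤ : ℕ∞) Real.sqrt (Set.Ioi 0) :=
    fun y hy => (Real.contDiffAt_sqrt (ne_of_gt hy)).contDiffWithinAt
  obtain ⟨s, hs⟩ : ∃ s : SF, s = SF.comp Real.sqrt hsq r hr := ⟨_, rfl⟩
  have hsx : ∀ y, s.1 y = Real.sqrt (r.1 y) := fun y => by rw [hs]; rfl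
  have hspos : ∀ y, 0 < s.1 y := fun y => by rw [hsx]; exact Real.sqrt_pos.2 (hr y)
  have hss : s * s = r := SF.ext_iff' fun y => by
    rw [SF.mul_apply, hsx]; exact Real.mul_self_sqrt (hr y).le
  have hds : ∀ j, 2 * (s * pdD j s) = pdD j r := fun j => by
    rw [← hss, Derivation.leibniz, smul_eq_mul]; ring
  have hsd : ∀ j, 2 * (h1 * pdD j s) = s * pdD j ψ := fun j => by
    apply SF.ext_iff'
    intro y
    have e1 := congrArg (fun f : SF => f.1 y) (hds j)
    have e2 := congrArg (fun f : SF => f.1 y) (hψ j)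
    have e3 := congrArg (fun f : SF => f.1 y) hss
    simp only [SF.mul_apply, SF.two_apply] at e1 e2 e3 ⊢
    apply mul_left_cancel₀ (hspos y).ne'
    linear_combination h1.1 y * e1 - e2 - (pdD j ψ).1 y * e3
  obtain ⟨c, hc⟩ : ∃ c : SF, c = algebraMap ℝ SF (1/4) := ⟨_, rfl⟩
  have hc4 : 4 * c = 1 := SF.ext_iff' fun y => by
    rw [SF.mul_apply, SF.four_apply, hc, SF.const_apply]; norm_num
  have hdc : ∀ i, pdD i c = 0 := fun i => by rw [hc]; exact pdD_const i _
  have hK : (fun y => deriv (hfun ε γ) (r.1 y) *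
      dvg (fun z => deriv (hfun ε γ) (r.1 z) • grad (fun w => Real.sqrt (r.1 w)) z) y /
      Real.sqrt (r.1 y)) = (c * (∑ j, pdD j ψ * pdD j ψ + 2 * (h1 * ∑ j, pdD j (pdD j ψ)))).1 := by
    funext y
    have e0 : (fun w => Real.sqrt (r.1 w)) = s.1 := funext fun y => (hsx y).symm
    have e1 : dvg (fun z => deriv (hfun ε γ) (r.1 z) • grad (fun w => Real.sqrt (r.1 w)) z) y
        = (∑ j, pdD j (h1 * pdD j s)).1 y := by
      rw [SF.sum_apply]
      refine Finset.sum_congr rfl fun j _ => ?_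
      rw [pdD_apply]
      congr 1
      funext z
      rw [e0, SF.mul_apply, hh1]; rfl
    rw [e1, ← hsx, ← hh1, div_eq_iff (hspos y).ne']
    have e2 : ∀ j, 2 * pdD j (h1 * pdD j s) = pdD j s * pdD j ψ + s * pdD j (pdD j ψ) := fun j => by
      have := congrArg (pdD j) (hsd j)
      have h2 : pdD j (2 : SF) = 0 := pdD_const j 2
      rw [Derivation.leibniz, Derivation.leibniz (pdD j) s, h2] at this
      simp only [smul_eq_mul, mul_zero, add_zero] at this
      rw [this]; ring
    have e3 : h1 * ∑ j, pdD j (h1 * pdD j s)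
       = c * (∑ j, pdD j ψ * pdD j ψ + 2 * (h1 * ∑ j, pdD j (pdD j ψ))) * s := by
      have e4 : 4 * (h1 * ∑ j, pdD j (h1 * pdD j s))
         = (∑ j, pdD j ψ * pdD j ψ + 2 * (h1 * ∑ j, pdD j (pdD j ψ))) * s := by
        simp only [Fin.sum_univ_three]
        linear_combination (2 * h1) * (e2 0 + e2 1 + e2 2) + (hsd 0) * pdD 0 ψ + (hsd 1) * pdD 1 ψ + (hsd 2) * pdD 2 ψ
      linear_combination (-(h1 * ∑ j, pdD j (h1 * pdD j s))) * hc4 + c * e4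
    have := congrArg (fun f : SF => f.1 y) e3
    simpa only [SF.mul_apply] using this
  have hKv : Kvec ε γ r.1 x i = (pdD i (c * (∑ j, pdD j ψ * pdD j ψ + 2 * (h1 * ∑ j, pdD j (pdD j ψ))))).1 x := by
    unfold Kvec
    rw [hK]; rfl
  rw [hKv]
  have e5 : 2 * (r * (pdD i (c * (∑ j, pdD j ψ * pdD j ψ + 2 * (h1 * ∑ j, pdD j (pdD j ψ))))))
     = r * (∑ j, pdD j ψ * pdD i (pdD j ψ) + pdD i (h1 * ∑ j, pdD j (pdD j ψ))) := by
    have h2 : pdD i (2 : SF) = 0 := pdD_const i 2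
    rw [Derivation.leibniz, hdc, map_add, Derivation.leibniz _ 2, h2]
    simp only [smul_eq_mul, mul_zero, add_zero, Fin.sum_univ_three, map_add, Derivation.leibniz _ (pdD _ ψ)]
    linear_combination (r * (pdD 0 ψ * pdD i (pdD 0 ψ) + pdD 1 ψ * pdD i (pdD 1 ψ) + pdD 2 ψ * pdD i (pdD 2 ψ)
      + pdD i (h1 * (pdD 0 (pdD 0 ψ) + pdD 1 (pdD 1 ψ) + pdD 2 (pdD 2 ψ))))) * hc4
  have := congrArg (fun f : SF => f.1 x) e5
  simpa only [SF.mul_apply, SF.two_apply] using this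

theorem muof_facts (ν κ : ℝ) (hκ : 0 < κ) (hν : 0 < ν) (h1 : κ ^ 2 < ν ^ 2) :
    0 < muof ν κ ∧ muof ν κ < 2 * ν ∧ κ ^ 2 = 2 * ν * muof ν κ - muof ν κ ^ 2 := by
  have hs := Real.sq_sqrt (sub_nonneg.2 h1.le)
  have h0 := Real.sqrt_nonneg (ν ^ 2 - κ ^ 2)
  unfold muof
  refine ⟨?_, by linarith, by linear_combination hs⟩
  have : √(ν^2-κ^2) < ν := by
    rw [Real.sqrt_lt' hν]; nlinarith
  linarith

theorem space_main (ε γ ν κ : ℝ) (hε : 0 < ε) (hγ1 : 1 < γ) (hγ3 : γ < 3) (hκ : 0 < κ) (hν : 0 < ν)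
    (hκν : κ ^ 2 < ν ^ 2) (hνκ : ν ^ 2 < 9 / 8 * κ ^ 2) (hεγ : 2 * γ ≤ 1 / ε ^ 2)
    (P Φ : ℝ → ℝ) (hP : IsPeps ε γ ν κ P) (hΦ : IsPhieps ε γ Φ)
    (r rt : SF) (v vt : Fin 3 → SF) (hr : ∀ x, 0 < r.1 x)
    (hcont : ∀ x, rt.1 x + dvg (fun y => r.1 y • fun i => (v i).1 y) x = 0)
    (hmom : ∀ x i, rt.1 x * (v i).1 x + r.1 x * (vt i).1 x
      + dvgM (fun y i' j => r.1 y * (v i').1 y * (v j).1 y) x i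
      + grad (fun y => r.1 y ^ γ + P (r.1 y)) x i
      + ptil ε (r.1 x) * (v i).1 x
    = 2 * ν * dvgM (fun y i' j => hfun ε γ (r.1 y) * symD (fun z i => (v i).1 z) y i' j) x i
      + 2 * ν * grad (fun y => gfun ε γ (r.1 y) * dvg (fun z i => (v i).1 z) y) x i
      + 2 * κ ^ 2 * r.1 x * Kvec ε γ r.1 x i)
    (w wt : Fin 3 → (Fin 3 → ℝ) → ℝ)
    (hw : ∀ x i, w i x = (v i).1 x + muof ν κ * pd i (fun z => Φ (r.1 z)) x)
    (hwt : ∀ x i, wt i x = (vt i).1 x + muof ν κ * pd i (fun z => deriv Φ (r.1 z) * rt.1 z) x) :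
    ∃ V : Fin 3 → SF, ∀ x, rt.1 x * (∑ i, w i x ^ 2) ^ 2
        + 4 * r.1 x * (∑ i, w i x ^ 2) * ∑ i, w i x * wt i x
      ≤ ∑ j, pd j (V j).1 x + 100 / ((2 * ν - muof ν κ) * ε)^2 / lamfun ε := by
  obtain ⟨hμ0, hμν, hrel⟩ := muof_facts ν κ hκ hν hκν
  have hΦ' : ∀ y, 0 < y → HasDerivAt Φ (deriv Φ y) y := fun y hy =>
    ((hΦ.1.contDiffAt (Ioi_mem_nhds hy)).differentiableAt (by simp)).hasDerivAt
  obtain ⟨ψ, hψd⟩ : ∃ f : SF, f = SF.comp Φ hΦ.1 r hr := ⟨_, rfl⟩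
  obtain ⟨h, hhd⟩ : ∃ f : SF, f = SF.comp _ (hfun_smooth ε γ) r hr := ⟨_, rfl⟩
  obtain ⟨h1, hh1d⟩ : ∃ f : SF, f = SF.comp _ (h1_smooth ε γ) r hr := ⟨_, rfl⟩
  obtain ⟨q, hqd⟩ : ∃ f : SF, f = SF.comp _ (rpow_smooth γ) r hr := ⟨_, rfl⟩
  obtain ⟨p, hpd⟩ : ∃ f : SF, f = SF.comp _ (ptil_smooth ε) r hr := ⟨_, rfl⟩
  have ψx : ∀ x, ψ.1 x = Φ (r.1 x) := fun x => by rw [hψd]; rfl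
  have hx : ∀ x, h.1 x = hfun ε γ (r.1 x) := fun x => by rw [hhd]; rfl
  have h1x : ∀ x, h1.1 x = deriv (hfun ε γ) (r.1 x) := fun x => by rw [hh1d]; rfl
  have qx : ∀ x, q.1 x = r.1 x ^ γ := fun x => by rw [hqd]; rfl
  have px : ∀ x, p.1 x = ptil ε (r.1 x) := fun x => by rw [hpd]; rfl
  obtain ⟨g, hg⟩ : ∃ f : SF, f = r * h1 - h := ⟨_, rfl⟩
  have gx : ∀ x, g.1 x = gfun ε γ (r.1 x) := fun x => by
    rw [hg, SF.sub_apply, SF.mul_apply, h1x, hx]; rfl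
  have hψf : (fun z => Φ (r.1 z)) = ψ.1 := funext fun z => (ψx z).symm
  have hψpd : ∀ i x, (pdD i ψ).1 x = deriv Φ (r.1 x) * pd i r.1 x := fun i x => by
    rw [pdD_apply, ← hψf]; exact pd_comp (hΦ' _ (hr x)) (SF.diff r x) i
  have hh : ∀ i, pdD i h = h1 * pdD i r := fun i => SF.ext_iff' fun x => by
    rw [pdD_apply, SF.mul_apply, h1x, pdD_apply]
    rw [show h.1 = fun y => hfun ε γ (r.1 y) from funext hx]
    exact pd_comp (hfun_hasDeriv' ε γ _ (hr x)) (SF.diff r x) i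
  have hψ : ∀ i, r * pdD i ψ = h1 * pdD i r := fun i => SF.ext_iff' fun x => by
    rw [SF.mul_apply, SF.mul_apply, hψpd, h1x, pdD_apply, ← mul_assoc, hΦ.2 _ (hr x)]
  have hcont' : rt = - ∑ j, pdD j (r * v j) := SF.ext_iff' fun x => by
    rw [SF.neg_apply, SF.sum_apply]
    have : dvg (fun y => r.1 y • fun i => (v i).1 y) x = ∑ j, (pdD j (r * v j)).1 x := rfl
    linarith [hcont x]
  obtain ⟨ψt, hψt⟩ : ∃ f : SF, f = - ∑ j, v j * pdD j ψ - h1 * ∑ j, pdD j (v j) := ⟨_, rfl⟩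
  have hrψt : r * ψt = h1 * rt := by
    rw [hψt, hcont']
    simp only [Fin.sum_univ_three, Derivation.leibniz, smul_eq_mul]
    linear_combination (-v 0) * hψ 0 - v 1 * hψ 1 - v 2 * hψ 2
  have ψtx : (fun z => deriv Φ (r.1 z) * rt.1 z) = ψt.1 := funext fun z => by
    have := congrArg (fun f : SF => f.1 z) hrψt
    simp only [SF.mul_apply, h1x] at this
    apply mul_left_cancel₀ (hr z).ne'
    rw [this, ← mul_assoc, hΦ.2 _ (hr z)]
  obtain ⟨νA, hνA⟩ : ∃ f : SF, f = algebraMap ℝ SF ν := ⟨_, rfl⟩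
  obtain ⟨μA, hμA⟩ : ∃ f : SF, f = algebraMap ℝ SF (muof ν κ) := ⟨_, rfl⟩
  obtain ⟨κA, hκA⟩ : ∃ f : SF, f = algebraMap ℝ SF (κ^2) := ⟨_, rfl⟩
  have νx : ∀ x, νA.1 x = ν := fun x => by rw [hνA]; rfl
  have μx : ∀ x, μA.1 x = muof ν κ := fun x => by rw [hμA]; rfl
  have κx : ∀ x, κA.1 x = κ^2 := fun x => by rw [hκA]; rfl
  obtain ⟨W, hW⟩ : ∃ W : Fin 3 → SF, ∀ i, W i = v i + μA * pdD i ψ := ⟨_, fun i => rfl⟩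
  obtain ⟨Wt, hWt⟩ : ∃ W : Fin 3 → SF, ∀ i, W i = vt i + μA * pdD i ψt := ⟨_, fun i => rfl⟩
  have Wx : ∀ i x, (W i).1 x = w i x := fun i x => by
    rw [hW, SF.add_apply, SF.mul_apply, μx, hw, hψf, pdD_apply]
  have Wtx : ∀ i x, (Wt i).1 x = wt i x := fun i x => by
    rw [hWt, SF.add_apply, SF.mul_apply, μx, hwt, ψtx, pdD_apply]
  have hmom' : ∀ i, rt * v i + r * vt i + ∑ j, pdD j (r * v i * v j) + (pdD i q + μA * p * pdD i ψ) + p * v i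
      = νA * ∑ j, pdD j (h * (pdD j (v i) + pdD i (v j))) + 2 * νA * pdD i (g * ∑ j, pdD j (v j))
        + κA * (r * (∑ j, pdD j ψ * pdD i (pdD j ψ) + pdD i (h1 * ∑ j, pdD j (pdD j ψ)))) := fun i => by
    apply SF.ext_iff'
    intro x
    have m := hmom x i
    have b := bohm ε γ r ψ h1 hr h1x hψ x i
    have t1 : dvgM (fun y i' j => r.1 y * (v i').1 y * (v j).1 y) x i = (∑ j, pdD j (r * v i * v j)).1 x := by
      rw [SF.sum_apply]; rfl
    have t2 : grad (fun y => r.1 y ^ γ + P (r.1 y)) x i = (pdD i q + μA * p * pdD i ψ).1 x := by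
      rw [SF.add_apply, SF.mul_apply, SF.mul_apply, μx, px, hψpd, pdD_apply]
      rw [show q.1 = fun y => r.1 y ^ γ from funext qx]
      have e1 := pd_comp (Real.hasDerivAt_rpow_const (p := γ) (Or.inl (hr x).ne')) (SF.diff r x) i
      have e2 := pd_comp ((Real.hasDerivAt_rpow_const (p := γ) (Or.inl (hr x).ne')).add (hP _ (hr x))) (SF.diff r x) i
      rw [e1]
      refine Eq.trans e2 ?_
      rw [← hΦ.2 _ (hr x)]
      have := (hr x).ne'
      field_simp
    have t3 : 2 * dvgM (fun y i' j => hfun ε γ (r.1 y) * symD (fun z i => (v i).1 z) y i' j) x i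
        = (∑ j, pdD j (h * (pdD j (v i) + pdD i (v j)))).1 x := by
      rw [SF.sum_apply, dvgM, Finset.mul_sum]
      refine Finset.sum_congr rfl fun j _ => ?_
      have : (fun y => hfun ε γ (r.1 y) * symD (fun z i => (v i).1 z) y i j)
          = ((1/2 : ℝ) • (h * (pdD j (v i) + pdD i (v j)))).1 := by
        funext y
        change _ = (1/2 : ℝ) * (h.1 y * (pd j (v i).1 y + pd i (v j).1 y))
        rw [hx, symD, jac, jac]; ring
      rw [this, ← pdD_apply, Derivation.map_smul]
      change 2 * ((1/2 : ℝ) * _) = _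
      ring
    have t4 : grad (fun y => gfun ε γ (r.1 y) * dvg (fun z i => (v i).1 z) y) x i
        = (pdD i (g * ∑ j, pdD j (v j))).1 x := by
      rw [pdD_apply, grad]
      congr 1
      funext y
      rw [SF.mul_apply, gx, SF.sum_apply]; rfl
    rw [t1, t2, ← px, t4] at m
    simp only [SF.add_apply _ (_ * _) x, SF.add_apply _ (∑ j, pdD j (r * v i * v j)) x, SF.add_apply _ (pdD i q + μA * p * pdD i ψ) x]
    simp only [SF.mul_apply _ (v i), SF.mul_apply r (vt i), SF.mul_apply νA, SF.mul_apply (2 * νA), SF.mul_apply κA, SF.mul_apply 2 νA, SF.two_apply, νx, κx]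
    rw [← b, ← t3]
    simp only [SF.add_apply, SF.mul_apply, px, μx] at m ⊢
    linear_combination m
  have hWeq : ∀ i, r * (Wt i + ∑ j, v j * pdD j (W i)) = - p * W i
      + ∑ j, pdD j (h * (νA * pdD j (W i) + (νA - μA) * pdD i (W j)))
      + pdD i ((2 * νA - μA) * g * ∑ j, pdD j (W j) - q) := fun i =>
    wt_eq pdD pdD_comm νA μA κA (fun i => by rw [hνA]; exact pdD_const i _)
      (fun i => by rw [hμA]; exact pdD_const i _)
      (SF.ext_iff' fun x => by
        simp only [SF.sub_apply, SF.mul_apply, SF.pow_apply, SF.two_apply, νx, μx, κx]; exact hrel)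
      r rt h h1 g q p ψ ψt v vt hh hψ hg hcont' hψt i (hmom' i) W Wt hW hWt
  obtain ⟨S, hS⟩ : ∃ S : Fin 3 → Fin 3 → SF, ∀ i j, S i j = h * (νA * pdD j (W i) + (νA - μA) * pdD i (W j))
      + if i = j then (2 * νA - μA) * g * ∑ j, pdD j (W j) - q else 0 := ⟨_, fun i j => rfl⟩
  have hen := energy_alg pdD r rt p v W Wt S hcont' (fun i => by
    rw [hWeq i]
    have : ∀ j, pdD j (S i j) = pdD j (h * (νA * pdD j (W i) + (νA - μA) * pdD i (W j)))
        + if i = j then pdD j ((2 * νA - μA) * g * ∑ j, pdD j (W j) - q) else 0 := fun j => by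
      rw [hS, map_add]; split_ifs <;> simp
    simp only [this, Finset.sum_add_distrib, Finset.sum_ite_eq, Finset.mem_univ, if_true]
    ring)
  refine ⟨fun j => - r * v j * (∑ i, W i ^ 2) ^ 2 + 4 * (∑ i, W i ^ 2) * ∑ i, W i * S i j, fun x => ?_⟩
  have hex := congrArg (fun f : SF => f.1 x) hen
  simp only [SF.add_apply, SF.sub_apply, SF.mul_apply, SF.pow_apply, SF.sum_apply, SF.four_apply, SF.two_apply, Wx, Wtx] at hex
  rw [hex]
  have hSx : ∀ i j, (S i j).1 x = h.1 x * (ν * (pdD j (W i)).1 x + (ν - muof ν κ) * (pdD i (W j)).1 x)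
      + if i = j then (2 * ν - muof ν κ) * g.1 x * (∑ k, (pdD k (W k)).1 x) - q.1 x else 0 := fun i j => by
    rw [hS, SF.add_apply]
    split_ifs <;>
    simp only [SF.add_apply, SF.sub_apply, SF.mul_apply, SF.sum_apply, SF.two_apply, SF.zero_apply, νx, μx]
  have hco := coer ν (muof ν κ) κ (h.1 x) (g.1 x) (q.1 x) hμ0 hμν hκ hrel hνκ
    (by rw [hx]; exact hfun_pos _ _ _ hε (hr x)) (by rw [gx, hx]; exact gfun_lo _ _ _ hε (hr x) hγ1)
    (by rw [gx, hx]; exact gfun_hi _ _ _ hε (hr x) hγ3) (fun i => w i x) (fun i j => (pdD j (W i)).1 x)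
  simp only [← hSx] at hco
  have hpr := press ε γ (r.1 x) (2 * ν - muof ν κ) (∑ i, w i x ^ 2) hε (hr x) (by linarith) hγ1
    (Finset.sum_nonneg fun i _ => sq_nonneg _) hεγ
  rw [← qx, ← px, ← hx] at hpr
  have hV : ∀ j, pd j (- r * v j * (∑ i, W i ^ 2) ^ 2 + 4 * (∑ i, W i ^ 2) * ∑ i, W i * S i j : SF).1 x
    = (pdD j (- r * v j * (∑ i, W i ^ 2) ^ 2 + 4 * (∑ i, W i ^ 2) * ∑ i, W i * S i j)).1 x := fun j => rfl
  simp only [hV]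
  linarith

theorem int_div (V : Fin 3 → SF) : ∫ x in unitBox 3, ∑ j, pd j (V j).1 x = 0 := by
  have hcont : ∀ j, Continuous (pd j (V j).1) := fun j => (pd_smooth (V j).2.1 j).continuous
  have := integral_divergence_of_hasFDerivAt_off_countable' (n := 2) (a := 0) (b := 1) (E := ℝ)
    (by intro i; simp) (fun i => (V i).1) (fun i x => fderiv ℝ (V i).1 x) ∅ Set.countable_empty
    (fun i => (V i).2.1.continuous.continuousOn) (fun x _ i => (SF.diff (V i) x).hasFDerivAt)
    (by
      apply ContinuousOn.integrableOn_compact isCompact_Icc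
      exact (continuous_finsetSum _ fun j _ => hcont j).continuousOn)
  refine Eq.trans this (Finset.sum_eq_zero fun i _ => ?_)
  rw [sub_eq_zero]
  congr 1
  funext x
  have e := (V i).2.2 (i.insertNth ((0 : Fin 3 → ℝ) i) x) (Pi.single i 1)
  rw [← e]
  refine congrArg (V i).1 ?_
  funext k
  refine Fin.succAboveCases i ?_ (fun k => ?_) k
  · simp
  · simp

/-- open space-time slab -/
def slab (T : ℝ) : Set (ℝ × (Fin 3 → ℝ)) := Set.Ioo 0 T ×ˢ Set.univ

theorem slab_open (T : ℝ) : IsOpen (slab T) := isOpen_Ioo.prod isOpen_univ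

theorem slab_mem {T t : ℝ} (ht : t ∈ Set.Ioo 0 T) (x) : (t, x) ∈ slab T := ⟨ht, trivial⟩

theorem slice_x {G : ℝ × (Fin 3 → ℝ) → ℝ} {t : ℝ} {x} (hG : DifferentiableAt ℝ G (t, x)) (i : Fin 3) :
    pd i (fun z => G (t, z)) x = fderiv ℝ G (t, x) (0, Pi.single i 1) := by
  have h := hG.hasFDerivAt.comp x (hasFDerivAt_prodMk_right (𝕜 := ℝ) t x)
  unfold pd
  rw [show fderiv ℝ (fun z => G (t, z)) x = _ from h.fderiv]
  simp

theorem slice_t {G : ℝ × (Fin 3 → ℝ) → ℝ} {t : ℝ} {x} (hG : DifferentiableAt ℝ G (t, x)) :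
    HasDerivAt (fun s => G (s, x)) (fderiv ℝ G (t, x) (1, 0)) t :=
  hG.hasFDerivAt.comp_hasDerivAt t ((hasDerivAt_id t).prodMk (hasDerivAt_const t x))

theorem smooth_fderiv {T : ℝ} {G : ℝ × (Fin 3 → ℝ) → ℝ} (hG : ContDiffOn ℝ (⊤ : ℕ∞) G (slab T)) (v) :
    ContDiffOn ℝ (⊤ : ℕ∞) (fun p => fderiv ℝ G p v) (slab T) :=
  (hG.fderiv_of_isOpen (slab_open T) (m := ((⊤ : ℕ∞) : WithTop ℕ∞)) (by simp)).clm_apply contDiffOn_const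

theorem slab_diff {T : ℝ} {G : ℝ × (Fin 3 → ℝ) → ℝ} (hG : ContDiffOn ℝ (⊤ : ℕ∞) G (slab T)) {p}
    (hp : p ∈ slab T) : DifferentiableAt ℝ G p :=
  (hG.contDiffAt ((slab_open T).mem_nhds hp)).differentiableAt (by simp)

theorem slab_slice {T t : ℝ} {G : ℝ × (Fin 3 → ℝ) → ℝ} (hG : ContDiffOn ℝ (⊤ : ℕ∞) G (slab T))
    (ht : t ∈ Set.Ioo 0 T) : ContDiff ℝ (⊤ : ℕ∞) (fun z => G (t, z)) := by
  refine contDiff_iff_contDiffAt.2 fun x => ?_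
  exact (hG.contDiffAt ((slab_open T).mem_nhds (slab_mem ht x))).comp x
    (contDiffAt_const.prodMk contDiffAt_id)

theorem slab_pd {T : ℝ} {G : ℝ × (Fin 3 → ℝ) → ℝ} (hG : ContDiffOn ℝ (⊤ : ℕ∞) G (slab T)) (i : Fin 3) :
    ContDiffOn ℝ (⊤ : ℕ∞) (fun p => pd i (fun z => G (p.1, z)) p.2) (slab T) :=
  (smooth_fderiv hG (0, Pi.single i 1)).congr fun p hp => slice_x (slab_diff hG hp) i

theorem slab_dt {T : ℝ} {G : ℝ × (Fin 3 → ℝ) → ℝ} (hG : ContDiffOn ℝ (⊤ : ℕ∞) G (slab T)) :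
    ContDiffOn ℝ (⊤ : ℕ∞) (fun p => deriv (fun s => G (s, p.2)) p.1) (slab T) :=
  (smooth_fderiv hG (1, 0)).congr fun p hp => (slice_t (slab_diff hG hp)).deriv

theorem mixed {T t : ℝ} {G : ℝ × (Fin 3 → ℝ) → ℝ} (hG : ContDiffOn ℝ (⊤ : ℕ∞) G (slab T))
    (ht : t ∈ Set.Ioo 0 T) (x) (i : Fin 3) :
    HasDerivAt (fun s => pd i (fun z => G (s, z)) x) (pd i (fun z => deriv (fun s => G (s, z)) t) x) t := by
  have h1 := slice_t (slab_diff (smooth_fderiv hG (0, Pi.single i 1)) (slab_mem ht x))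
  have h2 : pd i (fun z => deriv (fun s => G (s, z)) t) x
      = fderiv ℝ (fun p => fderiv ℝ G p (1, 0)) (t, x) (0, Pi.single i 1) := by
    rw [← slice_x (slab_diff (smooth_fderiv hG (1, 0)) (slab_mem ht x))]
    congr 1
    funext z
    exact (slice_t (slab_diff hG (slab_mem ht z))).deriv
  have hat := hG.contDiffAt ((slab_open T).mem_nhds (slab_mem ht x))
  have hsym : IsSymmSndFDerivAt ℝ G (t, x) := hat.isSymmSndFDerivAt (by
    simp only [minSmoothness_of_isRCLikeNormedField]; exact WithTop.coe_le_coe.2 (le_top : (2:ℕ∞) ≤ ⊤))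
  have hd : DifferentiableAt ℝ (fderiv ℝ G) (t, x) :=
    (hat.fderiv_right (m := ((⊤ : ℕ∞) : WithTop ℕ∞)) (by simp)).differentiableAt (by simp)
  have h3 : fderiv ℝ (fun p => fderiv ℝ G p (0, Pi.single i 1)) (t, x) (1, 0)
      = fderiv ℝ (fun p => fderiv ℝ G p (1, 0)) (t, x) (0, Pi.single i 1) := by
    rw [fderiv_clm_apply hd (by fun_prop), fderiv_clm_apply hd (by fun_prop)]
    simpa using hsym.eq _ _
  rw [h2, ← h3]
  refine h1.congr_of_eventuallyEq ?_
  filter_upwards [isOpen_Ioo.mem_nhds ht] with s hs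
  exact slice_x (slab_diff hG (slab_mem hs x)) i

theorem time_main {T C1 : ℝ} {F : ℝ × (Fin 3 → ℝ) → ℝ}
    (hc : ContinuousOn F (Set.Icc 0 T ×ˢ Set.univ)) (hd : ContDiffOn ℝ (⊤ : ℕ∞) F (slab T))
    (hb : ∀ t ∈ Set.Ioo 0 T, ∫ x in unitBox 3, deriv (fun s => F (s, x)) t ≤ C1) (t : ℝ)
    (ht : t ∈ Set.Ioo 0 T) :
    ∫ x in unitBox 3, F (t, x) ≤ (∫ x in unitBox 3, F (0, x)) + C1 * t := by
  have hbox : IsCompact (unitBox 3) := isCompact_Icc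
  have hboxm : MeasurableSet (unitBox 3) := measurableSet_Icc
  have hslice : ∀ s ∈ Set.Icc 0 T, ContinuousOn (fun x => F (s, x)) (unitBox 3) := fun s hs =>
    hc.comp (by fun_prop) (fun x _ => ⟨hs, trivial⟩)
  have hcont : ContinuousOn (fun s => ∫ x in unitBox 3, F (s, x)) (Set.Icc 0 T) := by
    obtain ⟨M, hM⟩ := (isCompact_Icc (a := (0:ℝ)) (b := T)).prod hbox |>.exists_bound_of_continuousOn
      (hc.mono (Set.prod_mono le_rfl (Set.subset_univ _)))
    refine continuousOn_of_dominated (bound := fun _ => M) ?_ ?_ ?_ ?_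
    · intro s hs
      exact (hslice s hs).aestronglyMeasurable hboxm
    · intro s hs
      exact ae_restrict_of_forall_mem hboxm fun x hx => hM (s, x) ⟨hs, hx⟩
    · exact integrableOn_const hbox.measure_lt_top.ne
    · refine Filter.Eventually.of_forall fun x => ?_
      exact hc.comp (by fun_prop) (fun s hs => ⟨hs, trivial⟩)
  have hderiv : ∀ s ∈ Set.Ioo 0 T, HasDerivAt (fun s => ∫ x in unitBox 3, F (s, x))
      (∫ x in unitBox 3, deriv (fun s => F (s, x)) s) s := by
    intro s hs
    obtain ⟨a, b, hsab, hab⟩ : ∃ a b, s ∈ Set.Ioo a b ∧ Set.Icc a b ⊆ Set.Ioo 0 T :=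
      ⟨s/2, (s+T)/2, ⟨by linarith [hs.1], by linarith [hs.2]⟩, fun y hy =>
        ⟨by linarith [hs.1, hy.1], by linarith [hs.2, hy.2]⟩⟩
    have hdt := (slab_dt hd).continuousOn
    obtain ⟨M, hM⟩ := (isCompact_Icc (a := a) (b := b)).prod hbox |>.exists_bound_of_continuousOn
      (hdt.mono (Set.prod_mono hab (Set.subset_univ _)))
    refine (hasDerivAt_integral_of_dominated_loc_of_deriv_le (μ := volume.restrict (unitBox 3))
      (F := fun s x => F (s, x)) (F' := fun s x => deriv (fun s => F (s, x)) s) (bound := fun _ => M)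
      (s := Set.Icc a b) (Icc_mem_nhds hsab.1 hsab.2) ?_ ?_ ?_ ?_ ?_ ?_).2
    · filter_upwards [isOpen_Ioo.mem_nhds hs] with y hy
      exact (hslice y ⟨hy.1.le, hy.2.le⟩).aestronglyMeasurable hboxm
    · exact (hslice s ⟨hs.1.le, hs.2.le⟩).integrableOn_compact hbox
    · refine ContinuousOn.aestronglyMeasurable ?_ hboxm
      exact hdt.comp (f := fun x => (s, x)) (by fun_prop) (fun x _ => slab_mem hs x)
    · exact ae_restrict_of_forall_mem hboxm fun x hx y hy => hM (y, x) ⟨hy, hx⟩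
    · exact integrableOn_const hbox.measure_lt_top.ne
    · refine Filter.Eventually.of_forall fun x y hy => ?_
      exact (slice_t (slab_diff hd (slab_mem (hab hy) x))).differentiableAt.hasDerivAt
  have := (convex_Icc 0 T).image_sub_le_mul_sub_of_deriv_le hcont
    (fun s hs => by
      rw [interior_Icc] at hs
      exact (hderiv s hs).differentiableAt.differentiableWithinAt)
    (C := C1) (fun s hs => by
      rw [interior_Icc] at hs
      rw [(hderiv s hs).deriv]; exact hb s hs) 0 ⟨le_rfl, (ht.1.trans ht.2).le⟩ t ⟨ht.1.le, ht.2.le⟩ ht.1.le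
  simp only [sub_zero] at this
  linarith

theorem cont_pd {T : ℝ} (hT : 0 < T) {G : ℝ × (Fin 3 → ℝ) → ℝ}
    (hG : ContDiffOn ℝ (⊤ : ℕ∞) G (Set.Icc 0 T ×ˢ Set.univ)) (i : Fin 3) :
    ContinuousOn (fun p => pd i (fun z => G (p.1, z)) p.2) (Set.Icc 0 T ×ˢ Set.univ) := by
  have hu : UniqueDiffOn ℝ (Set.Icc 0 T ×ˢ (Set.univ : Set (Fin 3 → ℝ))) :=
    (uniqueDiffOn_Icc hT).prod uniqueDiffOn_univ
  have h1 := hG.continuousOn_fderivWithin hu (by simp)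
  refine (h1.clm_apply (continuousOn_const (c := ((0 : ℝ), Pi.single i (1:ℝ))))).congr ?_
  rintro ⟨t, x⟩ hp
  have hd := (hG.differentiableOn (by simp) (t, x) hp).hasFDerivWithinAt
  have h := hd.comp x (s := Set.univ) (hasFDerivAt_prodMk_right (𝕜 := ℝ) t x).hasFDerivWithinAt
    (fun z _ => ⟨hp.1, trivial⟩)
  rw [hasFDerivWithinAt_univ] at h
  simp only [pd]
  rw [show fderiv ℝ (fun z => G (t, z)) x = _ from h.fderiv]
  simp

theorem core {ε γ ν κ T : ℝ} (hε : 0 < ε) (hγ1 : 1 < γ) (hγ3 : γ < 3) (hκ : 0 < κ) (hν : 0 < ν)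
    (hκν : κ ^ 2 < ν ^ 2) (hνκ : ν ^ 2 < 9 / 8 * κ ^ 2) (hεγ : 2 * γ ≤ 1 / ε ^ 2) (hT : 0 < T)
    {P Φ : ℝ → ℝ} (hP : IsPeps ε γ ν κ P) (hΦ : IsPhieps ε γ Φ)
    {ρ : ℝ → (Fin 3 → ℝ) → ℝ} {u : ℝ → (Fin 3 → ℝ) → (Fin 3 → ℝ)}
    (hs : IsQNSSol 3 ε γ ν κ T P ρ u)
    {w : ℝ → (Fin 3 → ℝ) → (Fin 3 → ℝ)}
    (hw : ∀ s y i, w s y i = u s y i + muof ν κ * grad (fun z => Φ (ρ s z)) y i)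
    (t : ℝ) (ht : t ∈ Set.Ioo 0 T) :
    ∫ x in unitBox 3, ρ t x * (∑ i, w t x i ^ 2) ^ 2 ≤
      (∫ x in unitBox 3, ρ 0 x * (∑ i, w 0 x i ^ 2) ^ 2)
        + 100 / ((2 * ν - muof ν κ) * ε) ^ 2 / lamfun ε * t := by
  obtain ⟨hρ, hu, hpos, hρp, hup, hce, hme⟩ := hs
  have hsub : slab T ⊆ Set.Icc 0 T ×ˢ Set.univ := Set.prod_mono Set.Ioo_subset_Icc_self le_rfl
  have hui : ∀ i, ContDiffOn ℝ (⊤ : ℕ∞) (fun p : ℝ × (Fin 3 → ℝ) => u p.1 p.2 i)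
      (Set.Icc 0 T ×ˢ Set.univ) := fun i => contDiffOn_pi.1 hu i
  have hG : ContDiffOn ℝ (⊤ : ℕ∞) (fun p : ℝ × (Fin 3 → ℝ) => Φ (ρ p.1 p.2))
      (Set.Icc 0 T ×ˢ Set.univ) := hΦ.1.comp hρ (fun p _ => hpos _ _)
  have hρs := hρ.mono hsub
  have hus := fun i => (hui i).mono hsub
  have hGs := hG.mono hsub
  have hΦd : ∀ r : ℝ, 0 < r → DifferentiableAt ℝ Φ r := fun r hr =>
    (hΦ.1.contDiffAt (isOpen_Ioi.mem_nhds hr)).differentiableAt (by simp)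
  have hwc : ∀ i, ContinuousOn (fun p : ℝ × (Fin 3 → ℝ) => w p.1 p.2 i) (Set.Icc 0 T ×ˢ Set.univ) := by
    intro i
    simp only [hw]
    exact (hui i).continuousOn.add (continuousOn_const.mul (cont_pd hT hG i))
  have hwd : ∀ i, ContDiffOn ℝ (⊤ : ℕ∞) (fun p : ℝ × (Fin 3 → ℝ) => w p.1 p.2 i) (slab T) := by
    intro i
    simp only [hw]
    exact (hus i).add (contDiffOn_const.mul (slab_pd hGs i))
  refine time_main (F := fun p => ρ p.1 p.2 * (∑ i, w p.1 p.2 i ^ 2) ^ 2) ?_ ?_ ?_ t ht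
  · exact hρ.continuousOn.mul ((continuousOn_finsetSum _ fun i _ => (hwc i).pow 2).pow 2)
  · exact hρs.mul ((ContDiffOn.sum fun i _ => (hwd i).pow 2).pow 2)
  intro t ht
  let r : SF := ⟨ρ t, slab_slice hρs ht, hρp t⟩
  let v : Fin 3 → SF := fun i => ⟨fun x => u t x i, slab_slice (hus i) ht, fun x n => by
    simp only [hup t x n]⟩
  let rt : SF := ⟨fun x => deriv (fun s => ρ s x) t, slab_slice (slab_dt hρs) ht, fun x n => by
    simp only [fun s => hρp s x n]⟩
  let vt : Fin 3 → SF := fun i => ⟨fun x => deriv (fun s => u s x i) t,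
    slab_slice (slab_dt (hus i)) ht, fun x n => by simp only [fun s => hup s x n]⟩
  have hrt : ∀ x, HasDerivAt (fun s => ρ s x) (rt.1 x) t := fun x =>
    (slice_t (slab_diff hρs (slab_mem ht x))).differentiableAt.hasDerivAt
  have hvt : ∀ x i, HasDerivAt (fun s => u s x i) ((vt i).1 x) t := fun x i =>
    (slice_t (slab_diff (hus i) (slab_mem ht x))).differentiableAt.hasDerivAt
  let wt : Fin 3 → (Fin 3 → ℝ) → ℝ := fun i x =>
    (vt i).1 x + muof ν κ * pd i (fun z => deriv Φ (r.1 z) * rt.1 z) x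
  have hwt : ∀ x i, HasDerivAt (fun s => w s x i) (wt i x) t := by
    intro x i
    simp only [hw]
    have h := mixed hGs ht x i
    have e : (fun z => deriv (fun s => Φ (ρ s z)) t) = fun z => deriv Φ (r.1 z) * rt.1 z := by
      funext z
      exact ((hΦd _ (hpos t z)).hasDerivAt.comp t (hrt z)).deriv
    simp only [e] at h
    exact (hvt x i).add (h.const_mul _)
  obtain ⟨V, hV⟩ := space_main ε γ ν κ hε hγ1 hγ3 hκ hν hκν hνκ hεγ P Φ hP hΦ r rt v vt
    (fun x => hpos t x) (fun x => hce t ht x) (fun x i => by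
      have h := hme t ht x i
      rw [((hrt x).fun_mul (hvt x i)).deriv] at h
      exact h) (fun i x => w t x i) wt (fun x i => hw t x i) (fun x i => rfl)
  have hdF : ∀ x, deriv (fun s => ρ s x * (∑ i, w s x i ^ 2) ^ 2) t
      = rt.1 x * (∑ i, w t x i ^ 2) ^ 2 + 4 * r.1 x * (∑ i, w t x i ^ 2) * ∑ i, w t x i * wt i x := by
    intro x
    have h := (hrt x).mul ((HasDerivAt.fun_sum (u := Finset.univ) fun i _ => (hwt x i).pow 2).pow 2)
    refine (h.congr_deriv ?_).deriv
    simp only [Pi.pow_apply, Fin.sum_univ_three, r]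
    push_cast
    ring
  have hbox : IsCompact (unitBox 3) := isCompact_Icc
  have hboxm : MeasurableSet (unitBox 3) := measurableSet_Icc
  set C1 := 100 / ((2 * ν - muof ν κ) * ε) ^ 2 / lamfun ε with hC1
  have hFd : ContDiffOn ℝ (⊤ : ℕ∞) (fun p : ℝ × (Fin 3 → ℝ) => ρ p.1 p.2 * (∑ i, w p.1 p.2 i ^ 2) ^ 2)
    (slab T) := hρs.mul ((ContDiffOn.sum fun i _ => (hwd i).pow 2).pow 2)
  have hcV : Continuous (fun x => ∑ j, pd j (V j).1 x) :=
    continuous_finsetSum _ fun j _ => (pd_smooth (V j).2.1 j).continuous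
  have hiV : IntegrableOn (fun x => ∑ j, pd j (V j).1 x) (unitBox 3) :=
    hcV.continuousOn.integrableOn_compact hbox
  have hic : IntegrableOn (fun _ : Fin 3 → ℝ => C1) (unitBox 3) :=
    integrableOn_const hbox.measure_lt_top.ne
  calc ∫ x in unitBox 3, deriv (fun s => ρ s x * (∑ i, w s x i ^ 2) ^ 2) t
      ≤ ∫ x in unitBox 3, ((∑ j, pd j (V j).1 x) + C1) := by
        refine setIntegral_mono_on ?_ (hiV.add hic) hboxm ?_
        · exact (slab_slice (slab_dt hFd) ht).continuous.continuousOn.integrableOn_compact hbox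
        · intro x _
          rw [hdF x]
          exact hV x
    _ = C1 := by
        rw [integral_add hiV hic, int_div V]
        simp [unitBox, Real.volume_Icc_pi, Measure.real]

theorem statement17 (γ : ℝ) (hγ1 : 1 < γ) (hγ3 : γ < 3) :
    ∃ δ : ℝ, 0 < δ ∧
      ∀ ν κ : ℝ, 0 < κ → 0 < ν → κ ^ 2 < ν ^ 2 → ν ^ 2 < 9 / 8 * κ ^ 2 →
      ∃ εf : ℝ, 0 < εf ∧
        ∀ ε : ℝ, 0 < ε → ε < εf →
        ∀ T : ℝ, 0 < T →
        ∀ (ρ0 : (Fin 3 → ℝ) → ℝ) (u0 : (Fin 3 → ℝ) → (Fin 3 → ℝ)),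
          ContDiff ℝ (⊤ : ℕ∞) ρ0 → ContDiff ℝ (⊤ : ℕ∞) u0 →
          SpacePeriodic ρ0 → SpacePeriodic u0 → (∀ x, 0 < ρ0 x) →
        ∃ C : ℝ,
          ∀ P Φ : ℝ → ℝ, IsPeps ε γ ν κ P → IsPhieps ε γ Φ →
          ∀ (ρ : ℝ → (Fin 3 → ℝ) → ℝ) (u : ℝ → (Fin 3 → ℝ) → (Fin 3 → ℝ)),
            IsQNSSol 3 ε γ ν κ T P ρ u → (∀ x, ρ 0 x = ρ0 x) → (∀ x, u 0 x = u0 x) →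
          ∀ w : ℝ → (Fin 3 → ℝ) → (Fin 3 → ℝ),
            (∀ s y i, w s y i = u s y i + muof ν κ * grad (fun z => Φ (ρ s z)) y i) →
          ∀ t ∈ Set.Ioo 0 T,
            (∫ x in unitBox 3, ρ t x * (∑ i, w t x i ^ 2) ^ ((3 + 2 * δ) / 2)) ≤ C := by
  refine ⟨1/2, by norm_num, fun ν κ hκ hν hκν hνκ => ⟨1/3, by norm_num, ?_⟩⟩
  intro ε hε hε3 T hT ρ0 u0 hρ0 hu0 _ _ hρ0p
  have hεγ : 2 * γ ≤ 1 / ε ^ 2 := by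
    rw [le_div_iff₀ (by positivity)]
    nlinarith
  have hmu := muof_facts ν κ hκ hν hκν
  have hC1 : 0 ≤ 100 / ((2 * ν - muof ν κ) * ε) ^ 2 / lamfun ε := by
    have : 0 < lamfun ε := Real.exp_pos _
    positivity
  refine ⟨(∫ x in unitBox 3, ρ0 x * (∑ i, (u0 x i + muof ν κ *
    (deriv (hfun ε γ) (ρ0 x) / ρ0 x * pd i ρ0 x)) ^ 2) ^ 2)
      + 100 / ((2 * ν - muof ν κ) * ε) ^ 2 / lamfun ε * T, ?_⟩
  intro P Φ hP hΦ ρ u hs h0 hu0' w hw t ht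
  have key := core hε hγ1 hγ3 hκ hν hκν hνκ hεγ hT hP hΦ hs hw t ht
  have e1 : ((3 : ℝ) + 2 * (1 / 2)) / 2 = ((2 : ℕ) : ℝ) := by norm_num
  simp only [e1, Real.rpow_natCast]
  have hr0 : ρ 0 = ρ0 := funext h0
  have hw0 : ∀ x i, w 0 x i = u0 x i + muof ν κ *
      (deriv (hfun ε γ) (ρ0 x) / ρ0 x * pd i ρ0 x) := by
    intro x i
    rw [hw, hu0', hr0]
    have hd : DifferentiableAt ℝ Φ (ρ0 x) :=
      (hΦ.1.contDiffAt (isOpen_Ioi.mem_nhds (hρ0p x))).differentiableAt (by simp)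
    have hg : grad (fun z => Φ (ρ0 z)) x i = deriv Φ (ρ0 x) * pd i ρ0 x :=
      pd_comp hd.hasDerivAt (hρ0.differentiable (by simp) x) i
    have hp := hρ0p x
    rw [hg, ← hΦ.2 _ hp, mul_div_cancel_left₀ _ hp.ne']
  simp only [hw0, h0] at key
  have := mul_le_mul_of_nonneg_left ht.2.le hC1
  linarith

end
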